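/- Let q be a real number with 0 < q and q ≠ 1, let h₁, h₂, α₁, λ be real numbers and t₁, t₂ nonzero reals, and let (i,i') = (1,2) or (i,i') = (2,1). Assume λ + α₁ = -N for some positive integer N (so (q^{λ+α₁};q)_n = 0 for all n > N and the series below is a finite sum). Then the function g(x) = x^{-α₁} · Σ_{n=0}^{N} (q^{h_i+1/2}t_i/x;q)_n · (q^{λ+α₁};q)_n · q^n · Σ_{k=0}^{n} q^{k²} · (q^{λ+α₁+h_i-h_{i'}}·t_i/t_{i'})^k / ((q;q)_k (q;q)_{n-k}) satisfies the variant of the confluent q-hypergeometric equation of type (0,2) for all x > 0. -/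

import Mathlib

/-- The finite q-shifted factorial `(a;q)_n = ∏_{i=0}^{n-1} (1 - a q^i)`. -/
noncomputable def qPoch (q a : ℝ) (n : ℕ) : ℝ :=
  ∏ i ∈ Finset.range n, (1 - a * q ^ i)

/-- The variant of the confluent q-hypergeometric equation of type (0,2) (for `x > 0`). -/
def confEq02 (q h₁ h₂ α₁ lam t₁ t₂ : ℝ) (g : ℝ → ℝ) : Prop :=
  ∀ x : ℝ, 0 < x →
    g (q * x)
    + q ^ (2 * lam + 1) * (1 - q ^ (-h₁ - 1/2) * t₁⁻¹ * x) * (1 - q ^ (-h₂ - 1/2) * t₂⁻¹ * x)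
        * g (x / q)
    - (q ^ (α₁ + 2 * lam - h₁ - h₂) * t₁⁻¹ * t₂⁻¹ * x ^ 2
        - q ^ (lam + 1/2) * (q ^ (-h₁) * t₁⁻¹ + q ^ (-h₂) * t₂⁻¹) * x
        + q ^ lam * (q + 1)) * g x = 0

/-!
Put `a = q^{hᵢ+1/2} tᵢ`, `b = q^{hᵢ'+1/2} tᵢ'`, `Q = q^{λ+α₁}`, `r = a/b`. Substituting
`g(x) = x^{-α₁} F(a/x)` turns the equation into `L F = 0` for a `q`-difference operator `L` in
`y = a/x`. This `L` maps `(y;q)_n` to `y` times a combination of `(y;q)_{n-1}`, `(y;q)_n` and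
`(y;q)_{n+1}`, so `L F = 0` for `F = ∑ (y;q)_n (Q;q)_n qⁿ Sₙ` amounts to a three-term recurrence for
the inner sums `Sₙ`. That is the recurrence of the Stieltjes–Wigert polynomials: their generating
function is the product of the Rogers–Ramanujan series `R(wX)` and the `q`-exponential `e_q(X)`, and
`R(X) - R(qX) = qX R(q²X)`, `e_q(qX) = (1 - X) e_q(X)`. By the recurrence, `L` applied to a partial
sum of `F` telescopes to a single term with the factor `(Q;q)_{N+1}`, which vanishes if `Q q^N = 1`.
-/

section QPoch

variable (q a : ℝ) (n : ℕ)

lemma qPoch_zero : qPoch q a 0 = 1 := Finset.prod_range_zero _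

lemma qPoch_succ : qPoch q a (n + 1) = qPoch q a n * (1 - a * q ^ n) :=
  Finset.prod_range_succ _ n

lemma qPoch_succ' : qPoch q a (n + 1) = (1 - a) * qPoch q (q * a) n := by
  rw [qPoch, Finset.prod_range_succ', pow_zero, mul_one, mul_comm, qPoch]
  congr! 3
  ring

variable {q}

lemma one_sub_mul_pow_ne_zero (hq : |q| ≠ 1) : 1 - q * q ^ n ≠ 0 := by
  intro h
  have hpow : q ^ (n + 1) = 1 := by rw [pow_succ']; linarith
  have habs : |q| ^ (n + 1) = 1 := by rw [← abs_pow, hpow, abs_one]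
  exact hq ((pow_eq_one_iff_of_nonneg (abs_nonneg q) n.succ_ne_zero).1 habs)

lemma qPoch_self_ne_zero (hq : |q| ≠ 1) : qPoch q q n ≠ 0 :=
  Finset.prod_ne_zero_iff.2 fun i _ => one_sub_mul_pow_ne_zero i hq

end QPoch

section StieltjesWigert

open PowerSeries

/-- The `q`-exponential `e_q(X) = ∑ Xᵏ / (q;q)_k`, a factor of `stieltjesWigertGen`. -/
noncomputable def qExp (q : ℝ) : ℝ⟦X⟧ := mk fun k => 1 / qPoch q q k

/-- The Rogers–Ramanujan series `R(X) = ∑ q^{k²} Xᵏ / (q;q)_k`, rescaled to give the other factor of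
`stieltjesWigertGen`. -/
noncomputable def rogersRamanujan (q : ℝ) : ℝ⟦X⟧ := mk fun k => q ^ k ^ 2 / qPoch q q k

/-- The generating function of `stieltjesWigertNeg`, in its product form. -/
noncomputable def stieltjesWigertGen (q w : ℝ) : ℝ⟦X⟧ :=
  rescale w (rogersRamanujan q) * qExp q

/-- The Stieltjes–Wigert polynomial `Sₙ(-w; q)`; the argument is negated to avoid signs. -/
noncomputable def stieltjesWigertNeg (q w : ℝ) (n : ℕ) : ℝ :=
  ∑ k ∈ Finset.range (n + 1), q ^ k ^ 2 * w ^ k / (qPoch q q k * qPoch q q (n - k))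

lemma stieltjesWigertNeg_zero (q w : ℝ) : stieltjesWigertNeg q w 0 = 1 := by
  simp [stieltjesWigertNeg, qPoch_zero]

lemma one_sub_mul_stieltjesWigertNeg_one {q : ℝ} (hq : q ≠ 1) (w : ℝ) :
    (1 - q) * stieltjesWigertNeg q w 1 = 1 + q * w := by
  have h : 1 - q ≠ 0 := sub_ne_zero.2 hq.symm
  have hsum : stieltjesWigertNeg q w 1 = (1 - q)⁻¹ + q * w / (1 - q) := by
    simp [stieltjesWigertNeg, Finset.sum_range_succ, qPoch]
  rw [hsum]
  field_simp

lemma coeff_stieltjesWigertGen (q w : ℝ) (n : ℕ) :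
    coeff n (stieltjesWigertGen q w) = stieltjesWigertNeg q w n := by
  rw [stieltjesWigertGen, coeff_mul, Finset.Nat.sum_antidiagonal_eq_sum_range_succ_mk,
    stieltjesWigertNeg]
  refine Finset.sum_congr rfl fun k _ => ?_
  simp only [coeff_rescale, rogersRamanujan, qExp, coeff_mk]
  ring

variable {q : ℝ}

lemma rescale_qExp (hq : |q| ≠ 1) : rescale q (qExp q) = (1 - X) * qExp q := by
  ext n
  rw [sub_mul, one_mul]
  cases n with
  | zero => simp [qExp]
  | succ n =>
    have hn := qPoch_self_ne_zero n hq
    have hn' := one_sub_mul_pow_ne_zero n hq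
    simp only [map_sub, coeff_succ_X_mul, coeff_rescale, qExp, coeff_mk, qPoch_succ]
    field_simp
    ring

lemma rescale_sq_qExp (hq : |q| ≠ 1) :
    rescale (q ^ 2) (qExp q) = (1 - C q * X) * ((1 - X) * qExp q) := by
  rw [pow_two, ← rescale_rescale, rescale_qExp hq, map_mul, rescale_qExp hq, map_sub, map_one,
    rescale_X]

lemma rogersRamanujan_sub_rescale (hq : |q| ≠ 1) :
    rogersRamanujan q - rescale q (rogersRamanujan q) =
      C q * X * rescale (q ^ 2) (rogersRamanujan q) := by
  ext n
  rw [mul_assoc, coeff_C_mul]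
  cases n with
  | zero => rw [map_sub, coeff_rescale, pow_zero, one_mul, sub_self, coeff_zero_X_mul, mul_zero]
  | succ n =>
    have hn := qPoch_self_ne_zero n hq
    have hn' := one_sub_mul_pow_ne_zero n hq
    simp only [map_sub, coeff_succ_X_mul, coeff_rescale, rogersRamanujan, coeff_mk, qPoch_succ]
    field_simp
    ring

lemma stieltjesWigertGen_functional_eq (hq : |q| ≠ 1) (w : ℝ) :
    (1 - C q * X) * ((1 - X) * stieltjesWigertGen q w - rescale q (stieltjesWigertGen q w)) =
      C (q * w) * X * rescale (q ^ 2) (stieltjesWigertGen q w) := by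
  have hC : rescale w (C q) = C q := by
    ext n
    cases n <;> simp [coeff_rescale, coeff_C]
  have hR := congrArg (rescale w) (rogersRamanujan_sub_rescale hq)
  simp only [map_sub, map_mul, rescale_X, hC, rescale_rescale, mul_comm _ w] at hR
  simp only [stieltjesWigertGen, map_mul, rescale_rescale, rescale_qExp hq, rescale_sq_qExp hq]
  linear_combination (1 - C q * X) * (1 - X) * qExp q * hR

theorem stieltjesWigertNeg_recurrence (hq : |q| ≠ 1) (w : ℝ) (n : ℕ) :
    (1 - q ^ (n + 2)) * stieltjesWigertNeg q w (n + 2) =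
      (1 + q - q ^ (n + 2) + w * q ^ (2 * n + 3)) * stieltjesWigertNeg q w (n + 1)
        - q * stieltjesWigertNeg q w n := by
  let G := stieltjesWigertGen q w
  have hexpand : G - X * G - C q * (X * G) + C q * (X * (X * G)) - rescale q G
      + C q * (X * rescale q G) = C (q * w) * (X * rescale (q ^ 2) G) := by
    linear_combination stieltjesWigertGen_functional_eq hq w
  have hn := congrArg (coeff (n + 2)) hexpand
  simp only [map_sub, map_add, coeff_C_mul, coeff_succ_X_mul, coeff_rescale,
    G, coeff_stieltjesWigertGen] at hn
  linear_combination hn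

end StieltjesWigert

section ConfOp

/-- The `q`-difference operator which `confEq02` becomes for `F` under `g(x) = x^{-α₁} F(a/x)`, as a
function of `y = a/x`; here `Q = q^{λ+α₁}` and `r` is the quotient of the singular points
`a = q^{h₁+1/2} t₁` and `b = q^{h₂+1/2} t₂`. -/
noncomputable def confOp (q Q r : ℝ) (F : ℝ → ℝ) (y : ℝ) : ℝ :=
  y ^ 2 * F (y / q) + q * Q ^ 2 * (y - 1) * (y - r) * F (q * y)
    - Q * (q * Q * r - q * (1 + r) * y + (q + 1) * y ^ 2) * F y

/-- The `N`-th partial sum of the series in `y = a/x` which solves `confOp q Q r F = 0`. -/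
noncomputable def confSum (q Q r : ℝ) (N : ℕ) (y : ℝ) : ℝ :=
  ∑ n ∈ Finset.range (N + 1), qPoch q y n * qPoch q Q n * q ^ n * stieltjesWigertNeg q (Q * r) n

/-- What remains of `confOp` applied to `confSum q Q r N` after telescoping. -/
noncomputable def confRemainder (q Q r : ℝ) (N : ℕ) (y : ℝ) : ℝ :=
  qPoch q Q (N + 1) * qPoch q y N * y / q ^ N *
    ((1 - q ^ (N + 1)) * stieltjesWigertNeg q (Q * r) (N + 1)
      - (1 - Q * q ^ (N + 1)) * (1 - y * q ^ N) * stieltjesWigertNeg q (Q * r) N)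

variable {q : ℝ} (Q r : ℝ)

lemma confSum_succ (N : ℕ) (y : ℝ) :
    confSum q Q r (N + 1) y = confSum q Q r N y +
      qPoch q Q (N + 1) * q ^ (N + 1) * stieltjesWigertNeg q (Q * r) (N + 1) *
        qPoch q y (N + 1) := by
  rw [confSum, Finset.sum_range_succ, confSum]
  ring

lemma confOp_add_const_mul (c : ℝ) (F G : ℝ → ℝ) (y : ℝ) :
    confOp q Q r (fun z => F z + c * G z) y = confOp q Q r F y + c * confOp q Q r G y := by
  simp only [confOp]
  ring

lemma confOp_qPoch_succ (hq : q ≠ 0) (n : ℕ) (y : ℝ) :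
    confOp q Q r (fun z => qPoch q z (n + 1)) y = qPoch q y n *
      (y ^ 2 * (1 - y / q) - q * Q ^ 2 * (y - r) * (1 - y * q ^ n) * (1 - y * q ^ (n + 1))
        - Q * (q * Q * r - q * (1 + r) * y + (q + 1) * y ^ 2) * (1 - y * q ^ n)) := by
  have hdiv : qPoch q (y / q) (n + 1) = (1 - y / q) * qPoch q y n := by
    rw [qPoch_succ', mul_div_cancel₀ y hq]
  have hmul : (1 - y) * qPoch q (q * y) (n + 1) =
      qPoch q y n * (1 - y * q ^ n) * (1 - y * q ^ (n + 1)) := by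
    rw [← qPoch_succ', qPoch_succ, qPoch_succ]
  rw [confOp, hdiv, qPoch_succ q y]
  linear_combination -(q * Q ^ 2 * (y - r)) * hmul

lemma confRemainder_zero (hq : q ≠ 1) (y : ℝ) :
    confRemainder q Q r 0 y = confOp q Q r (confSum q Q r 0) y := by
  have hone := one_sub_mul_stieltjesWigertNeg_one hq (Q * r)
  simp only [confRemainder, confOp, confSum, zero_add, Finset.sum_range_one, qPoch_succ, qPoch_zero,
    stieltjesWigertNeg_zero, pow_zero, pow_one]
  linear_combination (1 - Q) * y * hone

lemma confRemainder_succ (hq0 : q ≠ 0) (hq : |q| ≠ 1) (n : ℕ) (y : ℝ) :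
    confRemainder q Q r (n + 1) y = confRemainder q Q r n y +
      qPoch q Q (n + 1) * q ^ (n + 1) * stieltjesWigertNeg q (Q * r) (n + 1) *
        confOp q Q r (fun z => qPoch q z (n + 1)) y := by
  have hrec := stieltjesWigertNeg_recurrence hq (Q * r) n
  rw [confOp_qPoch_succ Q r hq0, confRemainder, confRemainder, qPoch_succ q Q (n + 1),
    qPoch_succ q y n, hrec]
  field_simp
  ring

theorem confOp_confSum (hq0 : q ≠ 0) (hq : |q| ≠ 1) (N : ℕ) (y : ℝ) :
    confOp q Q r (confSum q Q r N) y = confRemainder q Q r N y := by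
  induction N with
  | zero => exact (confRemainder_zero Q r (fun h => hq (by rw [h, abs_one])) y).symm
  | succ N ih =>
    rw [funext (confSum_succ Q r N), confOp_add_const_mul, ih, confRemainder_succ Q r hq0 hq]

theorem confOp_confSum_eq_zero (hq0 : q ≠ 0) (hq : |q| ≠ 1) {N : ℕ} (hQ : Q * q ^ N = 1) (y : ℝ) :
    confOp q Q r (confSum q Q r N) y = 0 := by
  have hterm : qPoch q Q (N + 1) = 0 := by rw [qPoch_succ, hQ, sub_self, mul_zero]
  rw [confOp_confSum Q r hq0 hq, confRemainder, hterm]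
  ring

end ConfOp

section ConfEq

/-- The point `q^{h+1/2} t`, a zero of the coefficient of `g(x/q)` in `confEq02`. -/
noncomputable def singularPoint (q h t : ℝ) : ℝ := q ^ (h + 1 / 2) * t

variable {q : ℝ} (h₁ h₂ α₁ lam t₁ t₂ : ℝ)

lemma confEq02_comm (g : ℝ → ℝ) :
    confEq02 q h₁ h₂ α₁ lam t₁ t₂ g ↔ confEq02 q h₂ h₁ α₁ lam t₂ t₁ g := by
  refine forall₂_congr fun x _ => ?_
  rw [sub_right_comm (α₁ + 2 * lam) h₂ h₁]
  ring_nf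

lemma inv_singularPoint (hq : 0 < q) (h t : ℝ) :
    (singularPoint q h t)⁻¹ = q ^ (-h - 1 / 2) * t⁻¹ := by
  rw [singularPoint, mul_inv, ← Real.rpow_neg hq.le]
  ring_nf

lemma rpow_neg_mul_inv_eq (hq : 0 < q) (h t : ℝ) :
    q ^ (-h) * t⁻¹ = q ^ (1 / 2 : ℝ) * (singularPoint q h t)⁻¹ := by
  rw [inv_singularPoint hq, ← mul_assoc, ← Real.rpow_add hq]
  ring_nf

lemma rpow_mul_div_eq_mul_singularPoint_div (hq : 0 < q) (s : ℝ) :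
    q ^ (s + h₁ - h₂) * t₁ / t₂ = q ^ s * (singularPoint q h₁ t₁ / singularPoint q h₂ t₂) := by
  rw [show s + h₁ - h₂ = s + (h₁ + 1 / 2) - (h₂ + 1 / 2) by ring, Real.rpow_sub hq,
    Real.rpow_add hq, singularPoint, singularPoint]
  field_simp

lemma confEq02_iff_singularPoint (hq : 0 < q) (g : ℝ → ℝ) {u v : ℝ}
    (hu : (singularPoint q h₁ t₁)⁻¹ = u) (hv : (singularPoint q h₂ t₂)⁻¹ = v) :
    confEq02 q h₁ h₂ α₁ lam t₁ t₂ g ↔ ∀ x : ℝ, 0 < x →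
      g (q * x) + q * (q ^ lam) ^ 2 * (1 - u * x) * (1 - v * x) * g (x / q)
        - q ^ lam * (q * q ^ (lam + α₁) * u * v * x ^ 2 - q * (u + v) * x + (q + 1)) * g x = 0 := by
  have hhalf : q ^ (1 / 2 : ℝ) * q ^ (1 / 2 : ℝ) = q := by
    rw [← Real.rpow_add hq, add_halves, Real.rpow_one]
  have hu' : q ^ (-h₁) * t₁⁻¹ = q ^ (1 / 2 : ℝ) * u := by rw [← hu, rpow_neg_mul_inv_eq hq]
  have hv' : q ^ (-h₂) * t₂⁻¹ = q ^ (1 / 2 : ℝ) * v := by rw [← hv, rpow_neg_mul_inv_eq hq]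
  have hshift : q ^ (2 * lam + 1) = q * (q ^ lam) ^ 2 := by
    rw [Real.rpow_add hq, two_mul, Real.rpow_add hq, Real.rpow_one]
    ring
  have hquad : q ^ (α₁ + 2 * lam - h₁ - h₂) * t₁⁻¹ * t₂⁻¹ =
      q ^ lam * (q * q ^ (lam + α₁) * u * v) := by
    rw [show α₁ + 2 * lam - h₁ - h₂ = lam + (lam + α₁) + -h₁ + -h₂ by ring, Real.rpow_add hq,
      Real.rpow_add hq, Real.rpow_add hq]
    linear_combination q ^ lam * q ^ (lam + α₁) *
      (q ^ (-h₂) * t₂⁻¹ * hu' + q ^ (1 / 2 : ℝ) * u * hv' + u * v * hhalf)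
  have hlin : q ^ (lam + 1 / 2) * (q ^ (-h₁) * t₁⁻¹ + q ^ (-h₂) * t₂⁻¹) =
      q ^ lam * (q * (u + v)) := by
    rw [hu', hv', Real.rpow_add hq]
    linear_combination q ^ lam * (u + v) * hhalf
  refine forall₂_congr fun x _ => ?_
  rw [← inv_singularPoint hq, ← inv_singularPoint hq, hu, hv, hshift, hquad, hlin]
  ring_nf

lemma confEq02_rpow_mul_comp_div_iff (hq : 0 < q) (ht₁ : t₁ ≠ 0) {a r : ℝ}
    (ha : singularPoint q h₁ t₁ = a) (hr : a / singularPoint q h₂ t₂ = r) (F : ℝ → ℝ) :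
    confEq02 q h₁ h₂ α₁ lam t₁ t₂ (fun x => x ^ (-α₁) * F (a / x)) ↔
      ∀ x : ℝ, 0 < x → confOp q (q ^ (lam + α₁)) r F (a / x) = 0 := by
  have ha0 : a ≠ 0 := ha ▸ mul_ne_zero (Real.rpow_pos_of_pos hq _).ne' ht₁
  have hv : (singularPoint q h₂ t₂)⁻¹ = r / a := by rw [← hr, div_div_cancel_left' ha0]
  rw [confEq02_iff_singularPoint h₁ h₂ α₁ lam t₁ t₂ hq _ (congrArg _ ha) hv]
  refine forall₂_congr fun x hx => ?_
  have hA : q ^ α₁ ≠ 0 := (Real.rpow_pos_of_pos hq _).ne'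
  have hX : x ^ (-α₁) ≠ 0 := (Real.rpow_pos_of_pos hx _).ne'
  have hmul : (q * x) ^ (-α₁) = (q ^ α₁)⁻¹ * x ^ (-α₁) := by
    rw [Real.mul_rpow hq.le hx.le, Real.rpow_neg hq.le]
  have hdiv : (x / q) ^ (-α₁) = q ^ α₁ * x ^ (-α₁) := by
    rw [Real.div_rpow hx.le hq.le, Real.rpow_neg hq.le, div_inv_eq_mul, mul_comm]
  have hfac : (q ^ α₁)⁻¹ * x ^ (-α₁) * (x / a) ^ 2 ≠ 0 :=
    mul_ne_zero (mul_ne_zero (inv_ne_zero hA) hX) (pow_ne_zero 2 (div_ne_zero hx.ne' ha0))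
  refine (Eq.congr_left ?_).trans (mul_eq_zero_iff_left hfac)
  rw [confOp, hmul, hdiv, show a / (q * x) = a / x / q by field_simp,
    show a / (x / q) = q * (a / x) by field_simp, Real.rpow_add hq]
  field_simp

theorem confEq02_confSum (hq : 0 < q) (hq1 : q ≠ 1) (ht₁ : t₁ ≠ 0) {N : ℕ}
    (hN : lam + α₁ = -(N : ℝ)) :
    confEq02 q h₁ h₂ α₁ lam t₁ t₂ fun x => x ^ (-α₁) *
      confSum q (q ^ (lam + α₁)) (singularPoint q h₁ t₁ / singularPoint q h₂ t₂) N
        (singularPoint q h₁ t₁ / x) := by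
  have habs : |q| ≠ 1 := by rwa [abs_of_pos hq]
  have hQ : q ^ (lam + α₁) * q ^ N = 1 := by
    rw [hN, Real.rpow_neg hq.le, Real.rpow_natCast, inv_mul_cancel₀ (pow_pos hq N).ne']
  exact (confEq02_rpow_mul_comp_div_iff h₁ h₂ α₁ lam t₁ t₂ hq ht₁ rfl rfl _).2
    fun x _ => confOp_confSum_eq_zero _ _ hq.ne' habs hQ _

end ConfEq

theorem stmt9 (q h₁ h₂ α₁ lam t₁ t₂ hᵢ hᵢ' tᵢ tᵢ' : ℝ) (N : ℕ)
    (hq : 0 < q) (hq1 : q ≠ 1) (ht₁ : t₁ ≠ 0) (ht₂ : t₂ ≠ 0)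
    (hidx : (hᵢ, hᵢ', tᵢ, tᵢ') = (h₁, h₂, t₁, t₂) ∨ (hᵢ, hᵢ', tᵢ, tᵢ') = (h₂, h₁, t₂, t₁))
    (hN : 0 < N) (hNlam : lam + α₁ = -(N : ℝ)) :
    confEq02 q h₁ h₂ α₁ lam t₁ t₂ (fun x =>
      x ^ (-α₁) * ∑ n ∈ Finset.range (N + 1),
        qPoch q (q ^ (hᵢ + 1/2) * tᵢ / x) n * qPoch q (q ^ (lam + α₁)) n * q ^ n *
          ∑ k ∈ Finset.range (n + 1),
            q ^ ((k : ℝ) ^ 2) * (q ^ (lam + α₁ + hᵢ - hᵢ') * tᵢ / tᵢ') ^ k /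
              (qPoch q q k * qPoch q q (n - k))) := by
  have hsol : tᵢ ≠ 0 → confEq02 q hᵢ hᵢ' α₁ lam tᵢ tᵢ' _ := fun htᵢ =>
    confEq02_confSum hᵢ hᵢ' α₁ lam tᵢ tᵢ' hq hq1 htᵢ hNlam
  simp only [confSum, stieltjesWigertNeg, ← rpow_mul_div_eq_mul_singularPoint_div _ _ _ _ hq,
    ← Real.rpow_natCast q (_ ^ 2), Nat.cast_pow] at hsol
  rcases hidx with hidx | hidx <;> obtain ⟨rfl, rfl, rfl, rfl⟩ := by simpa using hidx
  · exact hsol ht₁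
  · exact (confEq02_comm _ _ _ _ _ _ _).2 (hsol ht₂)
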